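/- Let C be a 3×3 symmetric positive-definite correlation matrix with (C^{−1})_{12} = 0, c_{13} ≠ 0 and c_{23} ≠ 0, and let (Z_1, Z_2, Z_3) ~ N_3(0, C). Let B = (a, b] with −∞ ≤ a < b ≤ +∞ (so P(Z_3 ∈ B) > 0). Then for all s, t ∈ ℝ, the sign of P(Z_1 ≤ s, Z_2 ≤ t | Z_3 ∈ B) − P(Z_1 ≤ s | Z_3 ∈ B)·P(Z_2 ≤ t | Z_3 ∈ B) equals the sign of c_{13} c_{23}; in particular it is nonzero, so Z_1 and Z_2 (and hence any variables obtained from them by strictly increasing transformations) are conditionally dependent given the event {Z_3 ∈ B}. Thus a zero entry of C^{−1} does not imply conditional independence once a coordinate is discretized. -/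

import Mathlib

/-!
Since `(C⁻¹)₁₂ = 0`, the Gaussian density factors so that, given `Z₃ = z`, the variables `Z₁` and
`Z₂` are independent and normal with means `(c₁₃ / c₃₃) z` and `(c₂₃ / c₃₃) z` and variances that do
not depend on `z`. Conditioning on `Z₃ ∈ B` only averages over `z`, so the difference in question
is the covariance, under the law of `Z₃` given `Z₃ ∈ B`, of the conditional distribution functions
`z ↦ F₁ (s - (c₁₃ / c₃₃) z)` and `z ↦ F₂ (t - (c₂₃ / c₃₃) z)`. If `c₁₃` and `c₂₃` are nonzero, both
are strictly monotone in `z`, and Chebyshev's identity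
`2 cov[f, g] = ∬ (f x - f y) (g x - g y)` gives the sign.
-/

open MeasureTheory Matrix Real

/-- Density of the centered multivariate Gaussian with covariance `S`. -/
noncomputable def gaussPdf {ι : Type*} [Fintype ι] [DecidableEq ι]
    (S : Matrix ι ι ℝ) (x : ι → ℝ) : ℝ :=
  Real.exp (-(x ⬝ᵥ S⁻¹.mulVec x) / 2) / Real.sqrt ((2 * π) ^ Fintype.card ι * S.det)

/-- The centered multivariate Gaussian measure `N(0, S)` on `ι → ℝ`. -/
noncomputable def gaussianMeasure {ι : Type*} [Fintype ι] [DecidableEq ι]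
    (S : Matrix ι ι ℝ) : Measure (ι → ℝ) :=
  volume.withDensity fun x => ENNReal.ofReal (gaussPdf S x)

open ProbabilityTheory

theorem sign_eq_sign_of_mul_pos {x y : ℝ} (h : 0 < x * y) : Real.sign x = Real.sign y := by
  rcases pos_and_pos_or_neg_and_neg_of_mul_pos h with ⟨hx, hy⟩ | ⟨hx, hy⟩
  · rw [Real.sign_of_pos hx, Real.sign_of_pos hy]
  · rw [Real.sign_of_neg hx, Real.sign_of_neg hy]

theorem sign_div_of_pos {c : ℝ} (x : ℝ) (hc : 0 < c) : Real.sign (x / c) = Real.sign x := by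
  simp only [Real.sign, div_pos_iff_of_pos_right hc, div_lt_iff₀ hc, zero_mul]

section Covariance

variable {α : Type*} [MeasurableSpace α] {ν : Measure α} {f g : α → ℝ}

theorem integrable_sub_mul_sub_prod [IsFiniteMeasure ν] (hf : MemLp f 2 ν) (hg : MemLp g 2 ν) :
    Integrable (fun p : α × α => (f p.1 - f p.2) * (g p.1 - g p.2)) (ν.prod ν) :=
  ((hf.comp_fst ν).sub (hf.comp_snd ν)).integrable_mul ((hg.comp_fst ν).sub (hg.comp_snd ν))

variable [IsProbabilityMeasure ν]

theorem integral_sub_mul_sub_prod (hf : MemLp f 2 ν) (hg : MemLp g 2 ν) :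
    ∫ p : α × α, (f p.1 - f p.2) * (g p.1 - g p.2) ∂ν.prod ν = 2 * cov[f, g; ν] := by
  have hfi := hf.integrable one_le_two
  have hgi := hg.integrable one_le_two
  have hfg : Integrable (fun x => f x * g x) ν := hf.integrable_mul hg
  have hdiag : Integrable (fun p : α × α => f p.1 * g p.1 + f p.2 * g p.2) (ν.prod ν) :=
    (hfg.comp_fst ν).add (hfg.comp_snd ν)
  have hcross : Integrable (fun p : α × α => f p.1 * g p.2 + g p.1 * f p.2) (ν.prod ν) :=
    (hfi.mul_prod hgi).add (hgi.mul_prod hfi)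
  have hexpand : (fun p : α × α => (f p.1 - f p.2) * (g p.1 - g p.2)) =
      fun p => f p.1 * g p.1 + f p.2 * g p.2 - (f p.1 * g p.2 + g p.1 * f p.2) := by
    funext p; ring
  rw [hexpand, integral_sub hdiag hcross, integral_add (hfg.comp_fst ν) (hfg.comp_snd ν),
    integral_add (hfi.mul_prod hgi) (hgi.mul_prod hfi),
    integral_fun_fst (fun x => f x * g x), integral_fun_snd (fun x => f x * g x),
    integral_prod_mul, integral_prod_mul, covariance_eq_sub hf hg]
  simp only [probReal_univ, one_smul, Pi.mul_apply]
  ring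

theorem covariance_pos_of_pairwise [MeasurableEq α] [NullSingletonClass ν]
    (hf : MemLp f 2 ν) (hg : MemLp g 2 ν)
    (hfg : Pairwise fun x y => 0 < (f x - f y) * (g x - g y)) : 0 < cov[f, g; ν] := by
  have hne : ∀ᵐ p : α × α ∂ν.prod ν, p.1 ≠ p.2 :=
    (Measure.ae_prod_iff_ae_ae (measurableSet_eq_fun measurable_fst measurable_snd).compl).2 <|
      .of_forall fun x => (Measure.ae_ne ν x).mono fun _ => Ne.symm
  have hpos : ∀ᵐ p : α × α ∂ν.prod ν, 0 < (f p.1 - f p.2) * (g p.1 - g p.2) :=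
    hne.mono fun _ hp => hfg hp
  have hsupport : Function.support (fun p : α × α => (f p.1 - f p.2) * (g p.1 - g p.2))
      =ᵐ[ν.prod ν] Set.univ :=
    Filter.eventuallyEq_univ.2 (hpos.mono fun _ hp => hp.ne')
  have hint : 0 < ∫ p : α × α, (f p.1 - f p.2) * (g p.1 - g p.2) ∂ν.prod ν := by
    rw [integral_pos_iff_support_of_nonneg_ae (hpos.mono fun _ hp => hp.le)
      (integrable_sub_mul_sub_prod hf hg), measure_congr hsupport, measure_univ]
    exact one_pos
  rw [integral_sub_mul_sub_prod hf hg] at hint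
  exact pos_of_mul_pos_right hint zero_le_two

theorem covariance_pos_of_strictAnti [LinearOrder α] [MeasurableEq α] [NullSingletonClass ν]
    (hf : StrictAnti f) (hg : StrictAnti g) (hf2 : MemLp f 2 ν) (hg2 : MemLp g 2 ν) :
    0 < cov[f, g; ν] := by
  refine covariance_pos_of_pairwise hf2 hg2 fun x y hxy => ?_
  rcases hxy.lt_or_gt with h | h
  · exact mul_pos (sub_pos.2 (hf h)) (sub_pos.2 (hg h))
  · exact mul_pos_of_neg_of_neg (sub_neg.2 (hf h)) (sub_neg.2 (hg h))

end Covariance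

theorem strictAnti_mul_comp_sub_mul {F : ℝ → ℝ} (hF : StrictMono F) (s : ℝ) {a : ℝ} (ha : a ≠ 0) :
    StrictAnti fun z => a * F (s - a * z) := by
  intro z w hzw
  rcases ha.lt_or_gt with h | h
  · exact mul_lt_mul_of_neg_left (hF (sub_lt_sub_left (mul_lt_mul_of_neg_left hzw h) s)) h
  · exact mul_lt_mul_of_pos_left (hF (sub_lt_sub_left (mul_lt_mul_of_pos_left hzw h) s)) h

theorem sign_covariance_comp_sub_mul {ν : Measure ℝ} [IsProbabilityMeasure ν]
    [NullSingletonClass ν] {F G : ℝ → ℝ} (hF : StrictMono F) (hG : StrictMono G) {s t a b : ℝ}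
    (hF2 : MemLp (fun z => F (s - a * z)) 2 ν) (hG2 : MemLp (fun z => G (t - b * z)) 2 ν) :
    Real.sign cov[fun z => F (s - a * z), fun z => G (t - b * z); ν] = Real.sign (a * b) := by
  rcases eq_or_ne a 0 with rfl | ha
  · simp
  rcases eq_or_ne b 0 with rfl | hb
  · simp
  have hpos := covariance_pos_of_strictAnti (strictAnti_mul_comp_sub_mul hF s ha)
    (strictAnti_mul_comp_sub_mul hG t hb) (hF2.const_mul a) (hG2.const_mul b)
  rw [covariance_const_mul_left, covariance_const_mul_right, ← mul_assoc, mul_comm] at hpos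
  exact sign_eq_sign_of_mul_pos hpos

section ConditionalIndependence

variable {Ω α β γ : Type*} [MeasurableSpace Ω] [MeasurableSpace α] [MeasurableSpace β]
  [MeasurableSpace γ] {P : Measure Ω} {X : Ω → α} {Y : Ω → β} {W : Ω → γ}
  {ν : Measure γ} [IsFiniteMeasure ν] {κ : Kernel γ α} {η : Kernel γ β} [IsMarkovKernel κ]
  [IsMarkovKernel η] {S : Set α} {T : Set β} {U : Set γ}

theorem memLp_kernel_real (p : ENNReal) (hS : MeasurableSet S) :
    MemLp (fun z => (κ z).real S) p ν :=
  .of_bound (κ.measurable_coe hS).ennreal_toReal.aestronglyMeasurable 1 <|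
    .of_forall fun _ => by
      rw [Real.norm_of_nonneg measureReal_nonneg]; exact measureReal_le_one

theorem measureReal_eq_setIntegral_of_hasLaw_compProd_prod
    (h : HasLaw (fun ω => (W ω, X ω, Y ω)) (ν ⊗ₘ (κ ×ₖ η)) P)
    (hS : MeasurableSet S) (hT : MeasurableSet T) (hU : MeasurableSet U) :
    P.real {ω | X ω ∈ S ∧ Y ω ∈ T ∧ W ω ∈ U} = ∫ z in U, (κ z).real S * (η z).real T ∂ν := by
  have hbox : P {ω | X ω ∈ S ∧ Y ω ∈ T ∧ W ω ∈ U} = (ν ⊗ₘ (κ ×ₖ η)) (U ×ˢ S ×ˢ T) := by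
    rw [← h.map_eq, Measure.map_apply_of_aemeasurable h.aemeasurable (hU.prod (hS.prod hT))]
    congr 1
    ext ω
    simp only [Set.mem_ofPred_eq, Set.mem_preimage, Set.mem_prod]
    tauto
  simp only [Measure.real, hbox, Measure.compProd_apply_prod hU (hS.prod hT),
    Kernel.prod_apply_prod, ← ENNReal.toReal_mul]
  exact (integral_toReal ((κ.measurable_coe hS).mul (η.measurable_coe hT)).aemeasurable
    (.of_forall fun z => ENNReal.mul_lt_top (measure_lt_top _ _) (measure_lt_top _ _))).symm

theorem condProb_eq_integral_cond_of_hasLaw_compProd_prod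
    (h : HasLaw (fun ω => (W ω, X ω, Y ω)) (ν ⊗ₘ (κ ×ₖ η)) P)
    (hS : MeasurableSet S) (hT : MeasurableSet T) (hU : MeasurableSet U) :
    P.real {ω | X ω ∈ S ∧ Y ω ∈ T ∧ W ω ∈ U} / P.real {ω | W ω ∈ U} =
      ∫ z, (κ z).real S * (η z).real T ∂ν[|U] := by
  have hW : P.real {ω | W ω ∈ U} = ν.real U := by
    simpa using measureReal_eq_setIntegral_of_hasLaw_compProd_prod h .univ .univ hU
  rw [hW, measureReal_eq_setIntegral_of_hasLaw_compProd_prod h hS hT hU, ProbabilityTheory.cond,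
    integral_smul_measure, ENNReal.toReal_inv, smul_eq_mul, div_eq_inv_mul, Measure.real]

theorem condProb_sub_mul_eq_covariance_of_hasLaw_compProd_prod
    (h : HasLaw (fun ω => (W ω, X ω, Y ω)) (ν ⊗ₘ (κ ×ₖ η)) P)
    (hS : MeasurableSet S) (hT : MeasurableSet T) (hU : MeasurableSet U) (hνU : ν U ≠ 0) :
    P.real {ω | X ω ∈ S ∧ Y ω ∈ T ∧ W ω ∈ U} / P.real {ω | W ω ∈ U} -
        P.real {ω | X ω ∈ S ∧ W ω ∈ U} / P.real {ω | W ω ∈ U} *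
          (P.real {ω | Y ω ∈ T ∧ W ω ∈ U} / P.real {ω | W ω ∈ U}) =
      cov[fun z => (κ z).real S, fun z => (η z).real T; ν[|U]] := by
  have := cond_isProbabilityMeasure hνU
  have hX := condProb_eq_integral_cond_of_hasLaw_compProd_prod h hS .univ hU
  have hY := condProb_eq_integral_cond_of_hasLaw_compProd_prod h .univ hT hU
  simp only [Set.mem_univ, true_and, probReal_univ, mul_one, one_mul] at hX hY
  rw [covariance_eq_sub (memLp_kernel_real 2 hS) (memLp_kernel_real 2 hT), hX, hY,
    condProb_eq_integral_cond_of_hasLaw_compProd_prod h hS hT hU]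
  rfl

end ConditionalIndependence

theorem strictMono_cdf (μ : Measure ℝ) [IsProbabilityMeasure μ] [μ.IsOpenPosMeasure] :
    StrictMono (cdf μ) := by
  intro s t hst
  have hpos : 0 < μ.real (Set.Ioc s t) :=
    ENNReal.toReal_pos ((Measure.measure_Ioo_pos μ).2 hst |>.trans_le
      (measure_mono Set.Ioo_subset_Ioc_self)).ne' (measure_ne_top _ _)
  rw [cdf_eq_real, cdf_eq_real, ← Set.Iic_union_Ioc_eq_Iic hst.le,
    measureReal_union (Set.Iic_disjoint_Ioc le_rfl) measurableSet_Ioc]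
  exact lt_add_of_pos_right _ hpos

theorem strictMono_cdf_gaussianReal (m : ℝ) {v : NNReal} (hv : v ≠ 0) :
    StrictMono (cdf (gaussianReal m v)) :=
  have := (gaussianReal_absolutelyContinuous' m hv).isOpenPosMeasure
  strictMono_cdf _

theorem gaussianReal_real_Iic_eq_cdf_sub (m : ℝ) (v : NNReal) (s : ℝ) :
    (gaussianReal m v).real (Set.Iic s) = cdf (gaussianReal 0 v) (s - m) := by
  rw [cdf_eq_real, ← zero_add m, ← gaussianReal_map_add_const (μ := 0) m,
    map_measureReal_apply (measurable_add_const m) measurableSet_Iic, zero_add,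
    Set.preimage_add_const_Iic]

section Precision

variable {𝕜 ι : Type*} [Field 𝕜] [Fintype ι] [DecidableEq ι]

theorem inv_apply_eq_neg_mul_div {C : Matrix ι ι 𝕜} (hC : IsUnit C.det) {i k : ι} (hik : i ≠ k)
    (hk : C k k ≠ 0) (h : ∀ j, j ≠ i → j ≠ k → C⁻¹ i j = 0) :
    C⁻¹ i k = -(C⁻¹ i i * (C i k / C k k)) := by
  have hsum : ∑ j, C⁻¹ i j * C j k = C⁻¹ i i * C i k + C⁻¹ i k * C k k :=
    Fintype.sum_eq_add i k hik fun j hj => by rw [h j hj.1 hj.2, zero_mul]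
  have hentry : C⁻¹ i i * C i k + C⁻¹ i k * C k k = 0 := by
    rw [← hsum, ← Matrix.mul_apply, Matrix.nonsing_inv_mul _ hC, Matrix.one_apply_ne hik]
  field_simp
  linear_combination hentry

variable {C : Matrix (Fin 3) (Fin 3) 𝕜}

theorem dotProduct_inv_mulVec_eq_of_inv_eq_zero (hC : IsUnit C.det) (hsymm : C.IsSymm)
    (h22 : C 2 2 ≠ 0) (h01 : C⁻¹ 0 1 = 0) (x : Fin 3 → 𝕜) :
    x ⬝ᵥ C⁻¹ *ᵥ x = C⁻¹ 0 0 * (x 0 - C 0 2 / C 2 2 * x 2) ^ 2 +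
      C⁻¹ 1 1 * (x 1 - C 1 2 / C 2 2 * x 2) ^ 2 + x 2 ^ 2 / C 2 2 := by
  have hinv (i j) : C⁻¹ i j = C⁻¹ j i := hsymm.inv.apply j i
  have h02 : C⁻¹ 0 2 = -(C⁻¹ 0 0 * (C 0 2 / C 2 2)) :=
    inv_apply_eq_neg_mul_div hC (by decide) h22 fun j _ _ => by fin_cases j <;> simp_all
  have h12 : C⁻¹ 1 2 = -(C⁻¹ 1 1 * (C 1 2 / C 2 2)) :=
    inv_apply_eq_neg_mul_div hC (by decide) h22 fun j _ _ => by
      fin_cases j <;> simp_all [hinv 1 0]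
  have hlast : C⁻¹ 2 2 =
      C⁻¹ 0 0 * (C 0 2 / C 2 2) ^ 2 + C⁻¹ 1 1 * (C 1 2 / C 2 2) ^ 2 + 1 / C 2 2 := by
    have hentry := congrFun₂ (Matrix.nonsing_inv_mul C hC) 2 2
    rw [Matrix.mul_apply, Fin.sum_univ_three, hinv 2 0, hinv 2 1, h02, h12,
      Matrix.one_apply_eq] at hentry
    field_simp at hentry ⊢
    linear_combination hentry
  simp only [Matrix.mulVec, dotProduct, Fin.sum_univ_three, hinv 1 0, hinv 2 0, hinv 2 1, h01,
    h02, h12, hlast]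
  ring

theorem det_mul_inv_mul_inv_eq_of_inv_eq_zero (hC : IsUnit C.det) (h01 : C⁻¹ 0 1 = 0) :
    C.det * (C⁻¹ 0 0 * C⁻¹ 1 1) = C 2 2 := by
  conv_rhs => rw [← Matrix.nonsing_inv_nonsing_inv C hC]
  rw [Matrix.inv_def C⁻¹, Matrix.adjugate_fin_three]
  simp [h01]

end Precision

section Gaussian

variable {ι : Type*} [Fintype ι] [DecidableEq ι] {C : Matrix (Fin 3) (Fin 3) ℝ}

/-- For `Z ~ N(0, C)` in dimension three, the conditional law of `Z i` given `Z 2 = z`, encoded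
through the regression coefficient of `Z i` on `Z 2` and the precision `C⁻¹ i i`. The conditional
precision is `C⁻¹ i i` only if `Z i` has zero partial correlation with the remaining coordinate. -/
noncomputable def gaussianCondKernel (C : Matrix (Fin 3) (Fin 3) ℝ) (i : Fin 3) : Kernel ℝ ℝ where
  toFun z := gaussianReal (C i 2 / C 2 2 * z) (C⁻¹ i i)⁻¹.toNNReal
  measurable' := by fun_prop

theorem gaussianCondKernel_apply (C : Matrix (Fin 3) (Fin 3) ℝ) (i : Fin 3) (z : ℝ) :
    gaussianCondKernel C i z = gaussianReal (C i 2 / C 2 2 * z) (C⁻¹ i i)⁻¹.toNNReal :=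
  rfl

instance (C : Matrix (Fin 3) (Fin 3) ℝ) (i : Fin 3) : IsMarkovKernel (gaussianCondKernel C i) where
  isProbabilityMeasure z := by rw [gaussianCondKernel_apply]; infer_instance

theorem measurable_gaussPdf (S : Matrix ι ι ℝ) : Measurable (gaussPdf S) := by
  unfold gaussPdf
  simp only [dotProduct, Matrix.mulVec]
  fun_prop

theorem toNNReal_inv_inv_ne_zero {S : Matrix ι ι ℝ} (hS : S.PosDef) (i : ι) :
    (S⁻¹ i i)⁻¹.toNNReal ≠ 0 :=
  (Real.toNNReal_pos.2 (inv_pos.2 hS.inv.diag_pos)).ne'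

theorem gaussPdf_eq_mul_of_inv_eq_zero (hC : C.PosDef) (h01 : C⁻¹ 0 1 = 0) (x : Fin 3 → ℝ) :
    gaussPdf C x = gaussianPDFReal 0 (C 2 2).toNNReal (x 2) *
      gaussianPDFReal (C 0 2 / C 2 2 * x 2) (C⁻¹ 0 0)⁻¹.toNNReal (x 0) *
      gaussianPDFReal (C 1 2 / C 2 2 * x 2) (C⁻¹ 1 1)⁻¹.toNNReal (x 1) := by
  have hdet : IsUnit C.det := hC.det_pos.ne'.isUnit
  have hC22 : 0 < C 2 2 := hC.diag_pos
  have hK0 : 0 < C⁻¹ 0 0 := hC.inv.diag_pos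
  have hK1 : 0 < C⁻¹ 1 1 := hC.inv.diag_pos
  have hnorm : √((2 * π) ^ Fintype.card (Fin 3) * C.det) =
      √(2 * π * C 2 2) * √(2 * π * (C⁻¹ 0 0)⁻¹) * √(2 * π * (C⁻¹ 1 1)⁻¹) := by
    rw [← Real.sqrt_mul (by positivity), ← Real.sqrt_mul (by positivity),
      ← det_mul_inv_mul_inv_eq_of_inv_eq_zero hdet h01, Fintype.card_fin]
    congr 1
    field_simp
  have hexp : Real.exp (-(x ⬝ᵥ C⁻¹ *ᵥ x) / 2) = Real.exp (-(x 2 - 0) ^ 2 / (2 * C 2 2)) *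
      Real.exp (-(x 0 - C 0 2 / C 2 2 * x 2) ^ 2 / (2 * (C⁻¹ 0 0)⁻¹)) *
      Real.exp (-(x 1 - C 1 2 / C 2 2 * x 2) ^ 2 / (2 * (C⁻¹ 1 1)⁻¹)) := by
    rw [← Real.exp_add, ← Real.exp_add, dotProduct_inv_mulVec_eq_of_inv_eq_zero hdet
      hC.isHermitian hC22.ne' h01]
    congr 1
    field_simp
    ring
  rw [gaussPdf, hexp, hnorm]
  simp only [gaussianPDFReal, Real.coe_toNNReal _ hC22.le, Real.coe_toNNReal _ (inv_pos.2 hK0).le,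
    Real.coe_toNNReal _ (inv_pos.2 hK1).le]
  ring

theorem measurePreserving_cons_cons_cons (α : Type*) [MeasureSpace α]
    [SigmaFinite (volume : Measure α)] :
    MeasurePreserving fun p : α × α × α => ![p.2.1, p.2.2, p.1] := by
  have h := (volume_preserving_piFinSuccAbove (fun _ : Fin 3 => α) 2).symm.comp
    ((MeasurePreserving.id volume).prod (volume_preserving_finTwoArrow α).symm)
  rw [← Measure.volume_eq_prod] at h
  convert h using 1
  ext p i
  fin_cases i <;> rfl

theorem lintegral_gaussianReal (m : ℝ) {v : NNReal} (hv : v ≠ 0) {f : ℝ → ENNReal}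
    (hf : Measurable f) :
    ∫⁻ x, f x ∂gaussianReal m v = ∫⁻ x, gaussianPDF m v x * f x := by
  rw [gaussianReal_of_var_ne_zero m hv,
    lintegral_withDensity_eq_lintegral_mul _ (measurable_gaussianPDF m v) hf]
  rfl

theorem lintegral_gaussianMeasure_map (S : Matrix (Fin 3) (Fin 3) ℝ) {f : ℝ × ℝ × ℝ → ENNReal}
    (hf : Measurable f) :
    ∫⁻ p, f p ∂(gaussianMeasure S).map (fun x => (x 2, x 0, x 1)) =
      ∫⁻ z, ∫⁻ x, ∫⁻ y, ENNReal.ofReal (gaussPdf S ![x, y, z]) * f (z, x, y) := by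
  have hpdf := (measurable_gaussPdf S).ennreal_ofReal
  rw [lintegral_map hf (by fun_prop), gaussianMeasure,
    lintegral_withDensity_eq_lintegral_mul _ hpdf (by fun_prop),
    ← (measurePreserving_cons_cons_cons ℝ).lintegral_comp (by fun_prop),
    Measure.volume_eq_prod, lintegral_prod _ (by fun_prop)]
  refine lintegral_congr fun z => ?_
  rw [Measure.volume_eq_prod, lintegral_prod _ (by fun_prop)]
  rfl

theorem gaussianMeasure_map_eq_compProd (hC : C.PosDef) (h01 : C⁻¹ 0 1 = 0) :
    (gaussianMeasure C).map (fun x => (x 2, x 0, x 1)) =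
      gaussianReal 0 (C 2 2).toNNReal ⊗ₘ (gaussianCondKernel C 0 ×ₖ gaussianCondKernel C 1) := by
  have hv : (C 2 2).toNNReal ≠ 0 := (Real.toNNReal_pos.2 hC.diag_pos).ne'
  have hpdf (x y z : ℝ) : ENNReal.ofReal (gaussPdf C ![x, y, z]) =
      gaussianPDF 0 (C 2 2).toNNReal z *
        (gaussianPDF (C 0 2 / C 2 2 * z) (C⁻¹ 0 0)⁻¹.toNNReal x *
          gaussianPDF (C 1 2 / C 2 2 * z) (C⁻¹ 1 1)⁻¹.toNNReal y) := by
    rw [gaussPdf_eq_mul_of_inv_eq_zero hC h01, mul_assoc,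
      ENNReal.ofReal_mul (gaussianPDFReal_nonneg _ _ _),
      ENNReal.ofReal_mul (gaussianPDFReal_nonneg _ _ _)]
    rfl
  refine Measure.ext_of_lintegral _ fun f hf => ?_
  rw [lintegral_gaussianMeasure_map C hf, Measure.lintegral_compProd hf,
    lintegral_gaussianReal 0 hv hf.lintegral_kernel_prod_right']
  refine lintegral_congr fun z => ?_
  rw [Kernel.lintegral_prod _ _ _ (by fun_prop), gaussianCondKernel_apply,
    gaussianCondKernel_apply,
    lintegral_gaussianReal _ (toNNReal_inv_inv_ne_zero hC 0) (by fun_prop),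
    ← lintegral_const_mul _ (by fun_prop)]
  refine lintegral_congr fun x => ?_
  rw [lintegral_gaussianReal _ (toNNReal_inv_inv_ne_zero hC 1) (by fun_prop),
    ← lintegral_const_mul _ (by fun_prop), ← lintegral_const_mul _ (by fun_prop)]
  refine lintegral_congr fun y => ?_
  rw [hpdf]
  ring

theorem sign_covariance_gaussianCondKernel (hC : C.PosDef) {ν : Measure ℝ}
    [IsProbabilityMeasure ν] [NullSingletonClass ν] (s t : ℝ) :
    Real.sign cov[fun z => (gaussianCondKernel C 0 z).real (Set.Iic s),
        fun z => (gaussianCondKernel C 1 z).real (Set.Iic t); ν] =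
      Real.sign (C 0 2 * C 1 2) := by
  have hcdf (i : Fin 3) (r : ℝ) : (fun z => (gaussianCondKernel C i z).real (Set.Iic r)) =
      fun z => cdf (gaussianReal 0 (C⁻¹ i i)⁻¹.toNNReal) (r - C i 2 / C 2 2 * z) := by
    funext z
    rw [gaussianCondKernel_apply, gaussianReal_real_Iic_eq_cdf_sub]
  have hL2 (i : Fin 3) (r : ℝ) :=
    memLp_kernel_real (ν := ν) (κ := gaussianCondKernel C i) 2 (measurableSet_Iic (a := r))
  simp only [hcdf] at hL2 ⊢
  rw [sign_covariance_comp_sub_mul (strictMono_cdf_gaussianReal 0 (toNNReal_inv_inv_ne_zero hC 0))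
    (strictMono_cdf_gaussianReal 0 (toNNReal_inv_inv_ne_zero hC 1)) (hL2 0 s) (hL2 1 t),
    div_mul_div_comm, sign_div_of_pos _ (mul_pos hC.diag_pos hC.diag_pos)]

end Gaussian

theorem nullSingletonClass_cond {α : Type*} [MeasurableSpace α] (μ : Measure α)
    [NullSingletonClass μ] (s : Set α) : NullSingletonClass μ[|s] :=
  ⟨fun x => cond_absolutelyContinuous (measure_singleton x)⟩

theorem volume_coe_preimage_Ioc_ne_zero {a b : EReal} (hab : a < b) :
    volume ((fun z : ℝ => (z : EReal)) ⁻¹' Set.Ioc a b) ≠ 0 := by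
  obtain ⟨x, hax, hxb⟩ := EReal.lt_iff_exists_real_btwn.1 hab
  obtain ⟨y, hxy, hyb⟩ := EReal.lt_iff_exists_real_btwn.1 hxb
  have hpos : 0 < volume (Set.Ioc x y) := by
    rw [Real.volume_Ioc, ENNReal.ofReal_pos, sub_pos]
    exact EReal.coe_lt_coe_iff.1 hxy
  refine (hpos.trans_le (measure_mono fun z hz => ?_)).ne'
  exact ⟨hax.trans (EReal.coe_lt_coe_iff.2 hz.1), (EReal.coe_le_coe_iff.2 hz.2).trans hyb.le⟩

theorem conditional_dependence_after_discretization_general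
    {C : Matrix (Fin 3) (Fin 3) ℝ} (hC : C.PosDef) (hpartial : C⁻¹ 0 1 = 0)
    {α : Type*} [MeasurableSpace α] {P : Measure α} {Z : α → Fin 3 → ℝ}
    (hZ : HasLaw Z (gaussianMeasure C) P) {U : Set ℝ} (hU : MeasurableSet U)
    (hU0 : volume U ≠ 0) (s t : ℝ) :
    Real.sign
        (P.real {ω | Z ω 0 ≤ s ∧ Z ω 1 ≤ t ∧ Z ω 2 ∈ U} / P.real {ω | Z ω 2 ∈ U} -
          P.real {ω | Z ω 0 ≤ s ∧ Z ω 2 ∈ U} / P.real {ω | Z ω 2 ∈ U} *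
            (P.real {ω | Z ω 1 ≤ t ∧ Z ω 2 ∈ U} / P.real {ω | Z ω 2 ∈ U})) =
      Real.sign (C 0 2 * C 1 2) := by
  have hv : (C 2 2).toNNReal ≠ 0 := (Real.toNNReal_pos.2 hC.diag_pos).ne'
  have hνU : gaussianReal 0 (C 2 2).toNNReal U ≠ 0 :=
    fun h => hU0 (gaussianReal_absolutelyContinuous' 0 hv h)
  have := cond_isProbabilityMeasure hνU
  have := nullSingletonClass_gaussianReal (μ := 0) hv
  have := nullSingletonClass_cond (gaussianReal 0 (C 2 2).toNNReal) U
  have hlaw : HasLaw (fun ω => (Z ω 2, Z ω 0, Z ω 1)) (gaussianReal 0 (C 2 2).toNNReal ⊗ₘ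
      (gaussianCondKernel C 0 ×ₖ gaussianCondKernel C 1)) P :=
    HasLaw.fun_comp ⟨by fun_prop, gaussianMeasure_map_eq_compProd hC hpartial⟩ hZ
  have hcov := condProb_sub_mul_eq_covariance_of_hasLaw_compProd_prod hlaw
    (measurableSet_Iic (a := s)) (measurableSet_Iic (a := t)) hU hνU
  simp only [Set.mem_Iic] at hcov
  rw [hcov, sign_covariance_gaussianCondKernel hC]

/-- for `(Z₁,Z₂,Z₃) ~ N₃(0,C)` with `(C⁻¹)₁₂ = 0`, `c₁₃ ≠ 0`, `c₂₃ ≠ 0`,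
and `B = (a, b]` (extended-real endpoints, `a < b`), the sign of
`P(Z₁ ≤ s, Z₂ ≤ t | Z₃ ∈ B) − P(Z₁ ≤ s | Z₃ ∈ B)·P(Z₂ ≤ t | Z₃ ∈ B)` equals the sign of
`c₁₃ c₂₃`, and in particular is nonzero: `Z₁` and `Z₂` are conditionally dependent given
the discretized event `{Z₃ ∈ B}`, so a zero entry of `C⁻¹` does not imply conditional
independence after discretization. -/
theorem conditional_dependence_after_discretization
    (C : Matrix (Fin 3) (Fin 3) ℝ) (hC : C.PosDef) (hCcorr : ∀ j, C j j = 1)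
    (hpartial : C⁻¹ 0 1 = 0) (h13 : C 0 2 ≠ 0) (h23 : C 1 2 ≠ 0)
    {α : Type*} [MeasurableSpace α] (P : Measure α) [IsProbabilityMeasure P]
    (Z : α → Fin 3 → ℝ) (hZmeas : Measurable Z) (hZlaw : P.map Z = gaussianMeasure C)
    (a b : EReal) (hab : a < b) (s t : ℝ) :
    Real.sign
        ((P {ω | Z ω 0 ≤ s ∧ Z ω 1 ≤ t ∧ a < (Z ω 2 : EReal) ∧ (Z ω 2 : EReal) ≤ b}).toReal /
            (P {ω | a < (Z ω 2 : EReal) ∧ (Z ω 2 : EReal) ≤ b}).toReal -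
          (P {ω | Z ω 0 ≤ s ∧ a < (Z ω 2 : EReal) ∧ (Z ω 2 : EReal) ≤ b}).toReal /
              (P {ω | a < (Z ω 2 : EReal) ∧ (Z ω 2 : EReal) ≤ b}).toReal *
            ((P {ω | Z ω 1 ≤ t ∧ a < (Z ω 2 : EReal) ∧ (Z ω 2 : EReal) ≤ b}).toReal /
              (P {ω | a < (Z ω 2 : EReal) ∧ (Z ω 2 : EReal) ≤ b}).toReal))
      = Real.sign (C 0 2 * C 1 2) ∧
    (P {ω | Z ω 0 ≤ s ∧ Z ω 1 ≤ t ∧ a < (Z ω 2 : EReal) ∧ (Z ω 2 : EReal) ≤ b}).toReal /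
          (P {ω | a < (Z ω 2 : EReal) ∧ (Z ω 2 : EReal) ≤ b}).toReal -
        (P {ω | Z ω 0 ≤ s ∧ a < (Z ω 2 : EReal) ∧ (Z ω 2 : EReal) ≤ b}).toReal /
            (P {ω | a < (Z ω 2 : EReal) ∧ (Z ω 2 : EReal) ≤ b}).toReal *
          ((P {ω | Z ω 1 ≤ t ∧ a < (Z ω 2 : EReal) ∧ (Z ω 2 : EReal) ≤ b}).toReal /
            (P {ω | a < (Z ω 2 : EReal) ∧ (Z ω 2 : EReal) ≤ b}).toReal)
      ≠ 0 := by
  have hsign := conditional_dependence_after_discretization_general hC hpartial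
    ⟨hZmeas.aemeasurable, hZlaw⟩ (measurable_coe_real_ereal measurableSet_Ioc)
    (volume_coe_preimage_Ioc_ne_zero hab) s t
  refine ⟨hsign, fun hzero => mul_ne_zero h13 h23 (Real.sign_eq_zero_iff.1 (hsign.symm.trans ?_))⟩
  exact Real.sign_eq_zero_iff.2 hzero
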